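/- Let (X, L) be a finite-to-one biautomatic structure on ℤ^N such that L = ∪_{j=1}^m U_{j,0} (V_{j,1})* U_{j,1} ⋯ (V_{j,α_j})* U_{j,α_j} for some words U_{j,k}, V_{j,k} over X with each V_{j,k} nonempty; that is, L consists exactly of the words U_{j,0} V_{j,1}^{β_1} U_{j,1} ⋯ V_{j,α_j}^{β_{α_j}} U_{j,α_j} with 1 ≤ j ≤ m and β_1, …, β_{α_j} ∈ ℤ_{≥0}. For each j and k set z_{j,k} = V̄_{j,k}/|V_{j,k}| ∈ ℚ^N, let C_j ⊆ ℝ^N be the polyhedral cone over { z_{j,1}, …, z_{j,α_j} }, and suppose y_j ∈ ℝ^N satisfies ⟨z_{j,k}, y_j⟩ = 1 for all 1 ≤ k ≤ α_j. Then: (i) ℝ^N = C_1 ∪ … ∪ C_m; (ii) ⟨v, y_j⟩ = ⟨v, y_k⟩ for all j, k and all v ∈ C_j ∩ C_k. Consequently, the function f(v) := max_{1≤j≤m} f_{C_j,y_j}(v) is a polyhedral function on ℝ^N. -/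

import Mathlib

/-!
Fix a branch `j` of the language. Since `⟨V̄_{j,k}, y_j⟩ = |V_{j,k}|`, going round a starred loop
changes the functional `⟨-, y_j⟩` by exactly the number of letters read. Hence along every word `W`
of the branch, `⟨W̄(t), y_j⟩` equals the length of the prefix `W(t)` up to an error depending only
on `j` (`branchWord_prefixBound`). Moreover `W̄` is `∑ β_k |V_{j,k}| z_{j,k}` up to an additive constant
(`intToEuc_branchWord`), so elements represented by the branch stay within bounded distance of the
cone `C_j`, and conversely every point of `C_j` is within bounded distance of an element
represented by the branch (`exists_branchWord_near`).

Covering: every `n • v` is within bounded distance of a lattice point, hence of some cone;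
dividing by `n`, `v` lies in the closure of `⋃ C_j`. Each `C_j` is closed because the coefficients
of a point of `C_j` sum to its pairing with `y_j`, so bounded parts of `C_j` are images of
compact boxes (`isClosed_cone`).

Compatibility: if `v ∈ C_j ∩ C_k`, then for each `n` there are words `W` of branch `j` and `W'` of
branch `k` representing elements within bounded distance of `n • v`. By the fellow-traveller
property, applied along a chain of boundedly many words of `L` (`fellow_chain`), `W` and `W'` stay
uniformly close in every additive functional. At time `|W'|` this says that `W` moves only a
bounded amount in the `y_j`-direction afterwards, and since it moves at unit speed there,
`|W| ≤ |W'| + O(1)`. As `|W| = n⟨v, y_j⟩ + O(1)` and `|W'| = n⟨v, y_k⟩ + O(1)`, letting `n → ∞`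
gives `⟨v, y_j⟩ ≤ ⟨v, y_k⟩`, and equality follows by symmetry.
-/

/-- The element of `ℤ^N` represented by a word over the alphabet `X`, via the letter map `π`. -/
def wordSum {N : ℕ} {X : Type*} (π : X → (Fin N → ℤ)) (U : List X) : Fin N → ℤ :=
  (U.map π).sum

/-- A biautomatic structure on the free abelian group `ℤ^N`. -/
structure ZBiautomaticStructure (N : ℕ) where
  /-- the alphabet -/
  X : Type
  fintypeX : Fintype X
  /-- the letter map -/
  π : X → (Fin N → ℤ)
  inj : Function.Injective π
  symm : ∀ x : X, ∃ x' : X, π x' = -(π x)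
  hasZero : ∃ x : X, π x = 0
  gen : AddSubgroup.closure (Set.range π) = ⊤
  /-- the language -/
  L : Language X
  regular : L.IsRegular
  represents : ∀ v : Fin N → ℤ, ∃ U ∈ L, wordSum π U = v
  fellowTraveller : ∃ lam : ℕ, ∀ U ∈ L, ∀ V ∈ L, ∀ x y : X,
    wordSum π U = π x + wordSum π V + π y →
    ∀ t : ℕ, ∃ W : List X,
      wordSum π W = wordSum π (U.take t) - π x - wordSum π (V.take t) ∧
      W.length ≤ lam

/-- A biautomatic structure on `ℤ^N` is finite-to-one if every element of `ℤ^N` is represented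
by only finitely many words of the language. -/
def ZBiautomaticStructure.FiniteToOne {N : ℕ} (B : ZBiautomaticStructure N) : Prop :=
  ∀ v : Fin N → ℤ, {U | U ∈ B.L ∧ wordSum B.π U = v}.Finite

open RealInnerProductSpace

noncomputable section

/-- The polyhedral cone over the finite family of vectors `z i`: all nonnegative
linear combinations of the `z i`. -/
def coneOverFam {n k : ℕ} (z : Fin k → EuclideanSpace ℝ (Fin n)) :
    Set (EuclideanSpace ℝ (Fin n)) :=
  {v | ∃ c : Fin k → ℝ, (∀ i, 0 ≤ c i) ∧ v = ∑ i, c i • z i}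

/-- A subset of `ℝ^n` is a polyhedral cone if it is the cone over some finite set of vectors. -/
def IsPolyhedralCone {n : ℕ} (C : Set (EuclideanSpace ℝ (Fin n))) : Prop :=
  ∃ (k : ℕ) (z : Fin k → EuclideanSpace ℝ (Fin n)), C = coneOverFam z

/-- The function `f_{C,y}`, equal to `⟨v, y⟩` on `C` and `0` elsewhere. -/
def coneFn {n : ℕ} (C : Set (EuclideanSpace ℝ (Fin n))) (y : EuclideanSpace ℝ (Fin n)) :
    EuclideanSpace ℝ (Fin n) → ℝ :=
  C.indicator (fun v => ⟪v, y⟫)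

/-- `f : ℝ^n → ℝ` is a polyhedral function if it is the pointwise maximum of finitely many
functions `f_{C_j, y_j}` whose polyhedral cones `C_j` cover `ℝ^n`, where `⟨z, y_j⟩ > 0` for all
nonzero `z ∈ C_j`, and where `⟨v, y_j⟩ = ⟨v, y_k⟩` whenever `v ∈ C_j ∩ C_k`. -/
def IsPolyhedral {n : ℕ} (f : EuclideanSpace ℝ (Fin n) → ℝ) : Prop :=
  ∃ (m : ℕ) (C : Fin m → Set (EuclideanSpace ℝ (Fin n))) (y : Fin m → EuclideanSpace ℝ (Fin n)),
    (∀ j, IsPolyhedralCone (C j)) ∧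
    (∀ j, ∀ z ∈ C j, z ≠ 0 → 0 < ⟪z, y j⟫) ∧
    (⋃ j, C j) = Set.univ ∧
    (∀ j k : Fin m, ∀ v, v ∈ C j → v ∈ C k → ⟪v, y j⟫ = ⟪v, y k⟫) ∧
    (∀ v, f v = ⨆ j, coneFn (C j) (y j) v)

end

/-- The canonical inclusion of `ℤ^N` in `ℝ^N` (as Euclidean space). -/
noncomputable def intToEuc {N : ℕ} (w : Fin N → ℤ) : EuclideanSpace ℝ (Fin N) :=
  (WithLp.equiv 2 (Fin N → ℝ)).symm (fun i => (w i : ℝ))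

/-! ### Words and lattice vectors -/

lemma wordSum_append {N : ℕ} {X : Type*} (π : X → (Fin N → ℤ)) (A B : List X) :
    wordSum π (A ++ B) = wordSum π A + wordSum π B := by
  simp [wordSum]

lemma wordSum_cons {N : ℕ} {X : Type*} (π : X → (Fin N → ℤ)) (x : X) (A : List X) :
    wordSum π (x :: A) = π x + wordSum π A := by
  simp [wordSum]

lemma wordSum_replicate {N : ℕ} {X : Type*} (π : X → (Fin N → ℤ)) (A : List X) (n : ℕ) :
    wordSum π (List.replicate n A).flatten = n • wordSum π A := by
  induction n with
  | zero => simp [wordSum]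
  | succ n ih =>
    rw [List.replicate_succ, List.flatten_cons, wordSum_append, ih, succ_nsmul, add_comm]

lemma wordSum_flatten_ofFn {N : ℕ} {X : Type*} (π : X → (Fin N → ℤ)) {n : ℕ}
    (A : Fin n → List X) :
    wordSum π (List.ofFn A).flatten = ∑ i, wordSum π (A i) := by
  induction n with
  | zero => simp [wordSum]
  | succ n ih =>
    rw [List.ofFn_succ, List.flatten_cons, Fin.sum_univ_succ, wordSum_append, ih]

lemma intToEuc_apply {N : ℕ} (w : Fin N → ℤ) (i : Fin N) : intToEuc w i = (w i : ℝ) := rfl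

/-- `intToEuc` as an additive homomorphism. -/
noncomputable def intToEucHom (N : ℕ) : (Fin N → ℤ) →+ EuclideanSpace ℝ (Fin N) :=
  AddMonoidHom.mk' intToEuc (fun a b => by ext i; simp [intToEuc_apply])

lemma intToEucHom_apply {N : ℕ} (w : Fin N → ℤ) : intToEucHom N w = intToEuc w := rfl

/-- The additive functional `w ↦ ⟨w, y⟩` on `ℤ^N`. -/
noncomputable def latticePairing {N : ℕ} (y : EuclideanSpace ℝ (Fin N)) :
    (Fin N → ℤ) →+ ℝ :=
  AddMonoidHom.mk' (fun w => ⟪intToEuc w, y⟫) (fun a b => by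
    rw [← intToEucHom_apply, map_add, inner_add_left]; rfl)

lemma latticePairing_apply {N : ℕ} (y : EuclideanSpace ℝ (Fin N)) (w : Fin N → ℤ) :
    latticePairing y w = ⟪intToEuc w, y⟫ := rfl

lemma abs_wordSum_le {N : ℕ} {X : Type*} (π : X → (Fin N → ℤ)) (φ : (Fin N → ℤ) →+ ℝ)
    (M : ℝ) (hM : ∀ x, |φ (π x)| ≤ M) (W : List X) :
    |φ (wordSum π W)| ≤ W.length * M := by
  induction W with
  | nil => simp [wordSum]
  | cons x W ih =>
    rw [wordSum_cons, map_add]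
    have := abs_add_le (φ (π x)) (φ (wordSum π W))
    have := hM x
    push_cast [List.length_cons]
    linarith

/-- Every point of `ℝ^N` is within distance `√N` of a lattice point. -/
lemma exists_lattice_near {N : ℕ} (v : EuclideanSpace ℝ (Fin N)) :
    ∃ w : Fin N → ℤ, ‖intToEuc w - v‖ ≤ √(N : ℝ) := by
  refine ⟨fun i => ⌊v i⌋, ?_⟩
  rw [EuclideanSpace.norm_eq]
  apply Real.sqrt_le_sqrt
  calc ∑ i, ‖(intToEuc (fun i => ⌊v i⌋) - v) i‖ ^ 2 ≤ ∑ i : Fin N, (1 : ℝ) := by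
        apply Finset.sum_le_sum
        intro i _
        have h1 := Int.floor_le (v i)
        have h2 := Int.lt_floor_add_one (v i)
        have h3 : (intToEuc (fun i => ⌊v i⌋) - v) i = (⌊v i⌋ : ℝ) - v i := rfl
        rw [h3, Real.norm_eq_abs, sq_abs]
        nlinarith
    _ = N := by simp

/-! ### Prefix defects -/

/-- The defect of a word: the value of the functional `φ` on the word minus its length. It is
additive under concatenation and vanishes on words along which `φ` grows by one per letter on
average. -/
def defect {N : ℕ} {X : Type*} (π : X → (Fin N → ℤ)) (φ : (Fin N → ℤ) →+ ℝ) (W : List X) : ℝ :=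
  φ (wordSum π W) - W.length

/-- All prefixes of `W` have defect at most `K` in absolute value. -/
def PrefixBound {N : ℕ} {X : Type*} (π : X → (Fin N → ℤ)) (φ : (Fin N → ℤ) →+ ℝ)
    (W : List X) (K : ℝ) : Prop :=
  ∀ t, |defect π φ (W.take t)| ≤ K

lemma defect_append {N : ℕ} {X : Type*} (π : X → (Fin N → ℤ)) (φ : (Fin N → ℤ) →+ ℝ)
    (A B : List X) : defect π φ (A ++ B) = defect π φ A + defect π φ B := by
  simp only [defect, wordSum_append, map_add, List.length_append]
  push_cast
  ring

lemma defect_nil {N : ℕ} {X : Type*} (π : X → (Fin N → ℤ)) (φ : (Fin N → ℤ) →+ ℝ) :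
    defect π φ [] = 0 := by
  simp [defect, wordSum]

section PrefixBound

variable {N : ℕ} {X : Type*} {π : X → (Fin N → ℤ)} {φ : (Fin N → ℤ) →+ ℝ}

lemma PrefixBound.nonneg {W : List X} {K : ℝ} (h : PrefixBound π φ W K) : 0 ≤ K :=
  (abs_nonneg _).trans (h 0)

lemma exists_prefixBound (π : X → (Fin N → ℤ)) (φ : (Fin N → ℤ) →+ ℝ) (W : List X) :
    ∃ K, PrefixBound π φ W K := by
  refine ⟨∑ t ∈ Finset.range (W.length + 1), |defect π φ (W.take t)|, fun t => ?_⟩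
  have h : W.take t = W.take (min t W.length) := by
    rcases le_total t W.length with h | h
    · rw [min_eq_left h]
    · rw [min_eq_right h, List.take_length, List.take_of_length_le h]
  rw [h]
  exact Finset.single_le_sum (f := fun t => |defect π φ (W.take t)|)
    (fun _ _ => abs_nonneg _) (by simp)

lemma PrefixBound.append {A B : List X} {a b : ℝ} (hA : PrefixBound π φ A a)
    (hB : PrefixBound π φ B b) : PrefixBound π φ (A ++ B) (a + b) := by
  intro t
  rw [List.take_append, defect_append]
  exact (abs_add_le _ _).trans (add_le_add (hA _) (hB _))

/-- Powers of a word of defect zero have prefix defects bounded independently of the exponent. -/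
lemma PrefixBound.replicate {A : List X} {a : ℝ} (hA : PrefixBound π φ A a)
    (h0 : defect π φ A = 0) (n : ℕ) :
    PrefixBound π φ (List.replicate n A).flatten a := by
  induction n with
  | zero =>
    intro t
    simpa [defect_nil] using hA.nonneg
  | succ n ih =>
    intro t
    rw [List.replicate_succ, List.flatten_cons, List.take_append, defect_append]
    rcases le_total t A.length with h | h
    · rw [Nat.sub_eq_zero_of_le h, List.take_zero, defect_nil, add_zero]
      exact hA t
    · rw [List.take_of_length_le h, h0, zero_add]
      exact ih _

lemma PrefixBound.flatten_ofFn {n : ℕ} {A : Fin n → List X} {a : Fin n → ℝ}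
    (h : ∀ i, PrefixBound π φ (A i) (a i)) :
    PrefixBound π φ (List.ofFn A).flatten (∑ i, a i) := by
  induction n with
  | zero =>
    intro t
    simp [defect_nil]
  | succ n ih =>
    rw [List.ofFn_succ, List.flatten_cons, Fin.sum_univ_succ]
    exact (h 0).append (ih fun i => h i.succ)

end PrefixBound

/-! ### Branches of a simply starred language -/

/-- The word `U_0 V_1^{β_1} U_1 ⋯ V_a^{β_a} U_a`. -/
def branchWord {X : Type*} {a : ℕ} (U : Fin (a + 1) → List X) (V : Fin a → List X)
    (β : Fin a → ℕ) : List X :=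
  U 0 ++ (List.ofFn fun l : Fin a => (List.replicate (β l) (V l)).flatten ++ U l.succ).flatten

section branch

variable {N : ℕ} {X : Type*} {π : X → (Fin N → ℤ)} {a : ℕ}
  (U : Fin (a + 1) → List X) {V : Fin a → List X} {z : Fin a → EuclideanSpace ℝ (Fin N)}

lemma length_smul_eq (hV : ∀ k, V k ≠ [])
    (hz : ∀ k, z k = (((V k).length : ℝ))⁻¹ • intToEuc (wordSum π (V k))) (k : Fin a) :
    ((V k).length : ℝ) • z k = intToEuc (wordSum π (V k)) := by
  have : ((V k).length : ℝ) ≠ 0 := by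
    simpa using hV k
  rw [hz, smul_inv_smul₀ this]

/-- Along the words of a branch, the functional `⟨-, y⟩` grows at unit speed up to a bounded
error. -/
lemma branchWord_prefixBound (hV : ∀ k, V k ≠ [])
    (hz : ∀ k, z k = (((V k).length : ℝ))⁻¹ • intToEuc (wordSum π (V k)))
    {y : EuclideanSpace ℝ (Fin N)} (hy : ∀ k, ⟪z k, y⟫ = 1) :
    ∃ K, ∀ β, PrefixBound π (latticePairing y) (branchWord U V β) K := by
  choose KU hKU using fun l => exists_prefixBound π (latticePairing y) (U l)
  choose KV hKV using fun l => exists_prefixBound π (latticePairing y) (V l)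
  refine ⟨KU 0 + ∑ l, (KV l + KU l.succ), fun β => ?_⟩
  refine (hKU 0).append (PrefixBound.flatten_ofFn fun l => ?_)
  refine ((hKV l).replicate ?_ _).append (hKU l.succ)
  rw [defect, latticePairing_apply, ← length_smul_eq hV hz, inner_smul_left, hy]
  simp

lemma intToEuc_branchWord (hV : ∀ k, V k ≠ [])
    (hz : ∀ k, z k = (((V k).length : ℝ))⁻¹ • intToEuc (wordSum π (V k))) (β : Fin a → ℕ) :
    intToEuc (wordSum π (branchWord U V β)) =
      ∑ l, intToEuc (wordSum π (U l)) + ∑ l, ((β l : ℝ) * (V l).length) • z l := by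
  simp only [mul_smul, length_smul_eq hV hz]
  simp only [← intToEucHom_apply]
  rw [branchWord, wordSum_append, wordSum_flatten_ofFn]
  simp only [wordSum_append, wordSum_replicate, map_add, map_sum, map_nsmul,
    Finset.sum_add_distrib, Nat.cast_smul_eq_nsmul]
  rw [Fin.sum_univ_succ]
  abel

/-- Every point of the cone of a branch is within bounded distance of an element represented by
the branch: round the number of turns round each loop down to an integer. -/
lemma exists_branchWord_near (hV : ∀ k, V k ≠ [])
    (hz : ∀ k, z k = (((V k).length : ℝ))⁻¹ • intToEuc (wordSum π (V k))) :
    ∃ R : ℝ, ∀ v ∈ coneOverFam z, ∃ β : Fin a → ℕ,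
      ‖intToEuc (wordSum π (branchWord U V β)) - v‖ ≤ R := by
  refine ⟨‖∑ l, intToEuc (wordSum π (U l))‖ + ∑ l, (V l).length * ‖z l‖, ?_⟩
  rintro v ⟨c, hc, rfl⟩
  refine ⟨fun l => ⌊c l / (V l).length⌋₊, ?_⟩
  rw [intToEuc_branchWord U hV hz, add_sub_assoc, ← Finset.sum_sub_distrib]
  refine (norm_add_le _ _).trans (add_le_add le_rfl ((norm_sum_le _ _).trans ?_))
  refine Finset.sum_le_sum fun l _ => ?_
  rw [← sub_smul, norm_smul]
  refine mul_le_mul_of_nonneg_right ?_ (norm_nonneg _)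
  have hpos : (0 : ℝ) < (V l).length := by
    exact_mod_cast List.length_pos_of_ne_nil (hV l)
  have h1 := Nat.floor_le (div_nonneg (hc l) hpos.le)
  have h2 := Nat.lt_floor_add_one (c l / (V l).length)
  rw [le_div_iff₀ hpos] at h1
  rw [div_lt_iff₀ hpos] at h2
  rw [Real.norm_eq_abs, abs_le]
  constructor <;> linarith

end branch

/-! ### Cones -/

section cone

variable {N k : ℕ} {z : Fin k → EuclideanSpace ℝ (Fin N)}

lemma coneOverFam_smul {r : ℝ} (hr : 0 ≤ r) {v : EuclideanSpace ℝ (Fin N)}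
    (hv : v ∈ coneOverFam z) : r • v ∈ coneOverFam z := by
  obtain ⟨c, hc, rfl⟩ := hv
  exact ⟨fun i => r * c i, fun i => mul_nonneg hr (hc i), by
    simp [Finset.smul_sum, mul_smul]⟩

lemma inner_cone {y : EuclideanSpace ℝ (Fin N)} (hy : ∀ i, ⟪z i, y⟫ = 1) (c : Fin k → ℝ) :
    ⟪∑ i, c i • z i, y⟫ = ∑ i, c i := by
  simp [sum_inner, inner_smul_left, hy]

lemma cone_inner_pos {y : EuclideanSpace ℝ (Fin N)} (hy : ∀ i, ⟪z i, y⟫ = 1)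
    {v : EuclideanSpace ℝ (Fin N)} (hv : v ∈ coneOverFam z) (h0 : v ≠ 0) : 0 < ⟪v, y⟫ := by
  obtain ⟨c, hc, rfl⟩ := hv
  rw [inner_cone hy]
  refine (Finset.sum_nonneg fun i _ => hc i).lt_of_ne fun h => h0 ?_
  have := (Finset.sum_eq_zero_iff_of_nonneg fun i _ => hc i).1 h.symm
  exact Finset.sum_eq_zero fun i hi => by rw [this i hi, zero_smul]

/-- A cone whose generators lie on the affine hyperplane `⟨-, y⟩ = 1` is closed: the coefficients
of a point are bounded by its pairing with `y`. -/
lemma isClosed_cone {y : EuclideanSpace ℝ (Fin N)} (hy : ∀ i, ⟪z i, y⟫ = 1) :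
    IsClosed (coneOverFam z) := by
  rw [← isSeqClosed_iff_isClosed]
  intro x v hx hlim
  have hin : Filter.Tendsto (fun n => ⟪x n, y⟫) Filter.atTop (nhds ⟪v, y⟫) :=
    hlim.inner tendsto_const_nhds
  obtain ⟨R, hR⟩ := hin.bddAbove_range
  have hcont : Continuous fun c : Fin k → ℝ => ∑ i, c i • z i := by fun_prop
  have hcl : IsClosed ((fun c : Fin k → ℝ => ∑ i, c i • z i) '' Set.Icc 0 (fun _ => R)) :=
    (isCompact_Icc.image hcont).isClosed
  have hmem : v ∈ (fun c : Fin k → ℝ => ∑ i, c i • z i) '' Set.Icc 0 (fun _ => R) := by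
    refine hcl.mem_of_tendsto hlim (Filter.Eventually.of_forall fun n => ?_)
    obtain ⟨c, hc, hxc⟩ := hx n
    refine ⟨c, ⟨hc, fun i => ?_⟩, hxc.symm⟩
    have h1 : ⟪x n, y⟫ ≤ R := hR ⟨n, rfl⟩
    rw [hxc, inner_cone hy] at h1
    exact (Finset.single_le_sum (fun i _ => hc i) (Finset.mem_univ i)).trans h1
  obtain ⟨c, hc, rfl⟩ := hmem
  exact ⟨c, hc.1, rfl⟩

end cone

/-! ### Fellow travelling -/

/-- Words of the language representing elements that differ by a word of length `D` fellow-travel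
with a constant linear in `D`, as measured by any additive functional. -/
lemma fellow_chain {N : ℕ} (B : ZBiautomaticStructure N) (φ : (Fin N → ℤ) →+ ℝ) :
    ∃ K : ℝ, 0 ≤ K ∧ ∀ S : List B.X, ∀ U ∈ B.L, ∀ V ∈ B.L,
      wordSum B.π U = wordSum B.π S + wordSum B.π V → ∀ t : ℕ,
      |φ (wordSum B.π (U.take t)) - φ (wordSum B.π (V.take t))| ≤ (S.length + 1) * K := by
  obtain ⟨lam, hlam⟩ := B.fellowTraveller
  obtain ⟨e, he⟩ := B.hasZero
  have := B.fintypeX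
  obtain ⟨M, hM0, hM⟩ : ∃ M : ℝ, 0 ≤ M ∧ ∀ x, |φ (B.π x)| ≤ M :=
    ⟨∑ x, |φ (B.π x)|, Finset.sum_nonneg fun _ _ => abs_nonneg _, fun x =>
      Finset.single_le_sum (f := fun x => |φ (B.π x)|) (fun _ _ => abs_nonneg _)
        (Finset.mem_univ x)⟩
  have step : ∀ U ∈ B.L, ∀ V ∈ B.L, ∀ x : B.X, wordSum B.π U = B.π x + wordSum B.π V →
      ∀ t : ℕ, |φ (wordSum B.π (U.take t)) - φ (wordSum B.π (V.take t))| ≤ (lam + 1) * M := by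
    intro U hU V hV x h t
    obtain ⟨W, hW, hWl⟩ := hlam U hU V hV x e (by rw [he, add_zero, h]) t
    have h1 := abs_wordSum_le B.π φ M hM W
    have h2 : (W.length : ℝ) * M ≤ lam * M :=
      mul_le_mul_of_nonneg_right (by exact_mod_cast hWl) hM0
    rw [hW, map_sub, map_sub] at h1
    have h3 := abs_le.1 (h1.trans h2)
    have h4 := abs_le.1 (hM x)
    rw [abs_le]
    constructor <;> linarith [h3.1, h3.2, h4.1, h4.2]
  refine ⟨(lam + 1) * M, by positivity, fun S => ?_⟩
  induction S with
  | nil =>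
    intro U hU V hV h t
    have := step U hU V hV e (by rw [he, h]; simp [wordSum]) t
    simpa using this
  | cons x S ih =>
    intro U hU V hV h t
    obtain ⟨P, hP, hPs⟩ := B.represents (wordSum B.π S + wordSum B.π V)
    have h1 := step U hU P hP x (by rw [hPs, h, wordSum_cons, add_assoc]) t
    have h2 := ih P hP V hV hPs t
    have h3 := abs_sub_le (φ (wordSum B.π (U.take t))) (φ (wordSum B.π (P.take t)))
      (φ (wordSum B.π (V.take t)))
    push_cast [List.length_cons]
    linarith

/-- Lattice vectors of bounded norm are represented by words of bounded length. -/
lemma exists_short_word {N : ℕ} (B : ZBiautomaticStructure N) (R : ℝ) :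
    ∃ D : ℕ, ∀ w : Fin N → ℤ, ‖intToEuc w‖ ≤ R →
      ∃ S : List B.X, wordSum B.π S = w ∧ S.length ≤ D := by
  choose f _ hf using B.represents
  have hfin : (Set.Icc (fun _ : Fin N => -⌈R⌉) (fun _ => ⌈R⌉)).Finite := Set.finite_Icc _ _
  obtain ⟨D, hD⟩ := (hfin.image fun w => (f w).length).bddAbove
  refine ⟨D, fun w hw => ⟨f w, hf w, hD ⟨w, ?_, rfl⟩⟩⟩
  have key : ∀ i, |w i| ≤ ⌈R⌉ := by
    intro i
    have h1 : |(w i : ℝ)| ≤ ‖intToEuc w‖ := by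
      simpa [intToEuc_apply] using PiLp.norm_apply_le (intToEuc w) i
    have h2 : (|w i| : ℤ) ≤ (⌈R⌉ : ℝ) := by
      push_cast
      exact (h1.trans hw).trans (Int.le_ceil R)
    exact_mod_cast h2
  exact ⟨fun i => (abs_le.1 (key i)).1, fun i => (abs_le.1 (key i)).2⟩

/-- If all multiples `n • v` are within bounded distance of words from two families in the language
along which `⟨-, y⟩` and `⟨-, y'⟩` respectively grow at unit speed up to a bounded error, then
`⟨v, y⟩ ≤ ⟨v, y'⟩`. -/
lemma inner_le_of_words_near {N : ℕ} (B : ZBiautomaticStructure N)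
    (v y y' : EuclideanSpace ℝ (Fin N)) (K K' R R' : ℝ) (W W' : ℕ → List B.X)
    (hW : ∀ n, W n ∈ B.L) (hW' : ∀ n, W' n ∈ B.L)
    (hp : ∀ n, PrefixBound B.π (latticePairing y) (W n) K)
    (hp' : ∀ n, PrefixBound B.π (latticePairing y') (W' n) K')
    (hR : ∀ n, ‖intToEuc (wordSum B.π (W n)) - (n : ℝ) • v‖ ≤ R)
    (hR' : ∀ n, ‖intToEuc (wordSum B.π (W' n)) - (n : ℝ) • v‖ ≤ R') :
    ⟪v, y⟫ ≤ ⟪v, y'⟫ := by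
  obtain ⟨D, hD⟩ := exists_short_word B (R + R')
  obtain ⟨F, hF0, hF⟩ := fellow_chain B (latticePairing y)
  -- the pairing of an approximant with `x` is `n * ⟨v, x⟩` up to a constant
  have approx : ∀ (u x : EuclideanSpace ℝ (Fin N)) (r : ℝ) (n : ℕ), ‖u - (n : ℝ) • v‖ ≤ r →
      |⟪u, x⟫ - n * ⟪v, x⟫| ≤ r * ‖x‖ := by
    intro u x r n h
    have h1 : ⟪u, x⟫ - n * ⟪v, x⟫ = ⟪u - (n : ℝ) • v, x⟫ := by
      simp [inner_sub_left, inner_smul_left]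
    rw [h1]
    exact (abs_real_inner_le_norm _ _).trans (mul_le_mul_of_nonneg_right h (norm_nonneg _))
  -- two fellow-travelling estimates, three prefix defects of `W n`, one of `W' n`, and the two
  -- approximation errors
  obtain ⟨Q, hQ⟩ : ∃ Q : ℝ, ∀ n : ℕ, n * (⟪v, y⟫ - ⟪v, y'⟫) ≤ Q := by
    refine ⟨2 * ((D + 1) * F) + 3 * K + K' + R * ‖y‖ + R' * ‖y'‖, fun n => ?_⟩
    obtain ⟨S, hS, hSl⟩ := hD (wordSum B.π (W n) - wordSum B.π (W' n)) (by
      have h1 : intToEuc (wordSum B.π (W n) - wordSum B.π (W' n)) =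
          (intToEuc (wordSum B.π (W n)) - (n : ℝ) • v) -
            (intToEuc (wordSum B.π (W' n)) - (n : ℝ) • v) := by
        rw [← intToEucHom_apply, map_sub, intToEucHom_apply, intToEucHom_apply]
        abel
      rw [h1]
      exact (norm_sub_le _ _).trans (add_le_add (hR n) (hR' n)))
    have hfc := hF S (W n) (hW n) (W' n) (hW' n) (by rw [hS]; abel)
    have hSF : ((S.length : ℝ) + 1) * F ≤ (D + 1) * F :=
      mul_le_mul_of_nonneg_right (by have : (S.length : ℝ) ≤ D := by exact_mod_cast hSl
                                     linarith) hF0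
    -- compare the two words at the end of `W' n` and after both have ended
    have e1 := (hfc (W' n).length).trans hSF
    have e2 := (hfc (max (W n).length (W' n).length)).trans hSF
    rw [List.take_length] at e1
    rw [List.take_of_length_le (le_max_left _ _), List.take_of_length_le (le_max_right _ _)] at e2
    have d1 := hp n (W' n).length
    have d2 := hp n (W n).length
    have d3 := hp' n (W' n).length
    rw [List.take_length] at d2 d3
    rw [defect] at d1 d2 d3
    have hlen : (((W n).take (W' n).length).length : ℝ) ≤ (W' n).length := by
      exact_mod_cast List.length_take_le _ _
    have a1 := approx _ y R n (hR n)
    have a2 := approx _ y' R' n (hR' n)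
    rw [← latticePairing_apply] at a1 a2
    rw [abs_le] at e1 e2 d1 d2 d3 a1 a2
    linarith [e1.1, e1.2, e2.1, e2.2, d1.1, d1.2, d2.1, d2.2, d3.1, d3.2, a1.1, a1.2, a2.1, a2.2]
  by_contra! h
  obtain ⟨n, hn⟩ := exists_nat_gt (Q / (⟪v, y⟫ - ⟪v, y'⟫))
  rw [div_lt_iff₀ (sub_pos.2 h)] at hn
  exact absurd (hQ n) (not_le.2 hn)

open RealInnerProductSpace in
/-- If the language of a finite-to-one biautomatic structure on `ℤ^N` is the simply starred
language `⋃_j U_{j,0} (V_{j,1})* U_{j,1} ⋯ (V_{j,α_j})* U_{j,α_j}`, if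
`z_{j,k} = V̄_{j,k}/|V_{j,k}| ∈ ℝ^N`, `C_j` is the polyhedral cone over `{z_{j,1},…,z_{j,α_j}}`,
and `y_j` satisfies `⟨z_{j,k}, y_j⟩ = 1` for all `k`, then the cones `C_j` cover `ℝ^N`, the
linear forms `⟨-, y_j⟩` agree on intersections of the cones, and `v ↦ max_j f_{C_j,y_j}(v)` is
a polyhedral function. -/
theorem stmt13 {N : ℕ} (B : ZBiautomaticStructure N) (hfo : B.FiniteToOne)
    (m : ℕ) (α : Fin m → ℕ)
    (U : (j : Fin m) → Fin (α j + 1) → List B.X)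
    (V : (j : Fin m) → Fin (α j) → List B.X)
    (hV : ∀ j k, V j k ≠ [])
    (hL : B.L = {W | ∃ (j : Fin m) (β : Fin (α j) → ℕ),
      W = U j 0 ++ (List.ofFn fun l : Fin (α j) =>
        (List.replicate (β l) (V j l)).flatten ++ U j l.succ).flatten})
    (z : (j : Fin m) → Fin (α j) → EuclideanSpace ℝ (Fin N))
    (hz : ∀ j k, z j k = (((V j k).length : ℝ))⁻¹ • intToEuc (wordSum B.π (V j k)))
    (y : Fin m → EuclideanSpace ℝ (Fin N))
    (hy : ∀ j k, ⟪z j k, y j⟫ = 1) :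
    (⋃ j, coneOverFam (z j)) = Set.univ ∧
    (∀ j k : Fin m, ∀ v, v ∈ coneOverFam (z j) → v ∈ coneOverFam (z k) →
      ⟪v, y j⟫ = ⟪v, y k⟫) ∧
    IsPolyhedral (fun v => ⨆ j, coneFn (coneOverFam (z j)) (y j) v) := by
  have hmem : ∀ j β, branchWord (U j) (V j) β ∈ B.L := by
    intro j β
    rw [hL]
    exact ⟨j, β, rfl⟩
  have hcover : (⋃ j, coneOverFam (z j)) = Set.univ := by
    have hcl : IsClosed (⋃ j, coneOverFam (z j)) :=
      isClosed_iUnion_of_finite fun j => isClosed_cone (hy j)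
    refine Set.eq_univ_of_forall fun v => ?_
    rw [← hcl.closure_eq, Metric.mem_closure_iff]
    intro ε hε
    -- `A` bounds the constant part of the elements represented by each branch
    set A : ℝ := ∑ j, ‖∑ l, intToEuc (wordSum B.π (U j l))‖ with hA
    obtain ⟨n, hn⟩ := exists_nat_gt ((√(N : ℝ) + A) / ε)
    have hA0 : 0 ≤ A := Finset.sum_nonneg fun _ _ => norm_nonneg _
    have hn0 : (0 : ℝ) < n := lt_of_le_of_lt (by positivity) hn
    obtain ⟨w, hw⟩ := exists_lattice_near ((n : ℝ) • v)
    obtain ⟨P, hP, rfl⟩ := B.represents w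
    rw [hL] at hP
    obtain ⟨j, β, rfl⟩ := hP
    have hval := intToEuc_branchWord (U j) (hV j) (hz j) β
    rw [branchWord] at hval
    rw [hval] at hw
    set p := ∑ l, ((β l : ℝ) * (V j l).length) • z j l with hp
    have hpc : p ∈ coneOverFam (z j) :=
      ⟨fun l => (β l : ℝ) * (V j l).length, fun l => by positivity, rfl⟩
    refine ⟨(n : ℝ)⁻¹ • p, Set.mem_iUnion.2 ⟨j, coneOverFam_smul (by positivity) hpc⟩, ?_⟩
    have hUA : ‖∑ l, intToEuc (wordSum B.π (U j l))‖ ≤ A :=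
      Finset.single_le_sum (f := fun j => ‖∑ l, intToEuc (wordSum B.π (U j l))‖)
        (fun _ _ => norm_nonneg _) (Finset.mem_univ j)
    have hdist : ‖(n : ℝ) • v - p‖ ≤ √(N : ℝ) + A := by
      have h1 : (n : ℝ) • v - p = ∑ l, intToEuc (wordSum B.π (U j l)) -
          (∑ l, intToEuc (wordSum B.π (U j l)) + p - (n : ℝ) • v) := by abel
      rw [h1]
      linarith [norm_sub_le (∑ l, intToEuc (wordSum B.π (U j l)))
        (∑ l, intToEuc (wordSum B.π (U j l)) + p - (n : ℝ) • v)]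
    have h2 : v - (n : ℝ)⁻¹ • p = (n : ℝ)⁻¹ • ((n : ℝ) • v - p) := by
      rw [smul_sub, inv_smul_smul₀ hn0.ne']
    rw [dist_eq_norm, h2, norm_smul, norm_inv, Real.norm_natCast, inv_mul_lt_iff₀ hn0]
    rw [div_lt_iff₀ hε] at hn
    exact hdist.trans_lt hn
  have hle : ∀ j k : Fin m, ∀ v, v ∈ coneOverFam (z j) → v ∈ coneOverFam (z k) →
      ⟪v, y j⟫ ≤ ⟪v, y k⟫ := by
    intro j k v hj hk
    obtain ⟨R, hR⟩ := exists_branchWord_near (U j) (hV j) (hz j)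
    obtain ⟨R', hR'⟩ := exists_branchWord_near (U k) (hV k) (hz k)
    obtain ⟨K, hK⟩ := branchWord_prefixBound (U j) (hV j) (hz j) (hy j)
    obtain ⟨K', hK'⟩ := branchWord_prefixBound (U k) (hV k) (hz k) (hy k)
    choose β hβ using fun n : ℕ => hR _ (coneOverFam_smul n.cast_nonneg hj)
    choose β' hβ' using fun n : ℕ => hR' _ (coneOverFam_smul n.cast_nonneg hk)
    exact inner_le_of_words_near B v (y j) (y k) K K' R R' _ _ (fun n => hmem j (β n))
      (fun n => hmem k (β' n)) (fun n => hK _) (fun n => hK' _) hβ hβ'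
  have heq : ∀ j k : Fin m, ∀ v, v ∈ coneOverFam (z j) → v ∈ coneOverFam (z k) →
      ⟪v, y j⟫ = ⟪v, y k⟫ := fun j k v hj hk =>
    le_antisymm (hle j k v hj hk) (hle k j v hk hj)
  exact ⟨hcover, heq, m, fun j => coneOverFam (z j), y, fun j => ⟨α j, z j, rfl⟩,
    fun j v hv h0 => cone_inner_pos (hy j) hv h0, hcover, heq, fun v => rfl⟩
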